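/- Let λ ≥ 0 be real and k ≥ 1 an integer. Consider the densely defined operator T in the Hilbert space L²((0,∞)) with domain C_c^∞((0,∞)) given by T f = L^k f, where (Lg)(x) = −x² g″(x) − 2x g′(x) + λ g(x). Then T is symmetric and essentially self-adjoint: the closure of T is self-adjoint, i.e. the closure of T coincides with the adjoint of T. -/

import Mathlib

/-! The substitution `x = e^t` sends `f` to `e^{t/2} f(e^t)`. This is an isometry of `L²((0,∞))` into
`L²(ℝ)` (`inner_U`) that carries `C_c^∞((0,∞))` onto `C_c^∞(ℝ)` and the operator `L` to the
constant-coefficient operator `A = -d²/dt² + (λ + 1/4)` (`toS_Lop`).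

On Schwartz space `A` is the Fourier multiplier with real symbol `λ + 1/4 + 4π²ξ²`, which is at
least `λ + 1/4 > 0`. By Plancherel `A` is symmetric (`A_symm`) and bounded below (`A_lower`), and
dividing by the symbol shows that it is onto (`A_surj`). These properties pass to `A^k`. As
`C_c^∞(ℝ)` is dense in Schwartz space (`exists_cc_tendsto`), `A^k` maps it onto a dense subspace of
`L²(ℝ)` (`eq_zero_of_inner_iterate_A`).

So `T` is symmetric, bounded below and has dense range, which forces its closure to be its adjoint
(`closure_eq_adjoint_of_bounded_below`). -/

open MeasureTheory
open scoped InnerProductSpace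

/-- The operator `L = DᵗD + λ`, `(Lg)(x) = -x²g''(x) - 2xg'(x) + λg(x)`. -/
noncomputable def Lop (lam : ℝ) (g : ℝ → ℂ) : ℝ → ℂ :=
  fun x => -(x : ℂ) ^ 2 * iteratedDeriv 2 g x - 2 * (x : ℂ) * deriv g x + (lam : ℂ) * g x

/-- The subset of `L²((0,∞))` consisting of (classes of) smooth functions compactly
supported in `(0,∞)`. -/
def ccSet : Set (Lp ℂ 2 (volume.restrict (Set.Ioi (0 : ℝ)))) :=
  {g | ∃ f : ℝ → ℂ, ContDiff ℝ (⊤ : ℕ∞) f ∧ HasCompactSupport f ∧ tsupport f ⊆ Set.Ioi 0 ∧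
    (g : ℝ → ℂ) =ᵐ[volume.restrict (Set.Ioi (0 : ℝ))] f}

open SchwartzMap FourierTransform Filter Topology

/-! ### An abstract criterion for essential self-adjointness -/

/-- A densely defined symmetric operator that is bounded below by a positive constant and has
dense range is essentially self-adjoint. Boundedness below lifts every limit of values `T uₙ` to
a limit point of the graph, so the closure is surjective; it is then all of the adjoint because
the adjoint is injective, its kernel being orthogonal to the range of `T`. Density of the range
is stated as triviality of its orthogonal complement. -/
theorem closure_eq_adjoint_of_bounded_below {H : Type*} [NormedAddCommGroup H]
    [InnerProductSpace ℂ H] [CompleteSpace H] (T : H →ₗ.[ℂ] H) (hd : Dense (T.domain : Set H))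
    (hsym : ∀ u v : T.domain, ⟪T u, (v : H)⟫_ℂ = ⟪(u : H), T v⟫_ℂ)
    {c : ℝ} (hc : 0 < c) (hlow : ∀ u : T.domain, c * ‖(u : H)‖ ≤ ‖T u‖)
    (hrange : ∀ v : H, (∀ u : T.domain, ⟪v, T u⟫_ℂ = 0) → v = 0) :
    T.closure = T.adjoint := by
  have hle : T ≤ T.adjoint := LinearPMap.IsFormalAdjoint.le_adjoint hd hsym
  have hcl : T.adjoint.IsClosed := LinearPMap.adjoint_isClosed hd
  have hT : T.IsClosable := hcl.isClosable.leIsClosable hle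
  have hle' : T.closure ≤ T.adjoint := by
    refine LinearPMap.le_of_le_graph ?_
    rw [← hT.graph_closure_eq_closure_graph]
    exact Submodule.topologicalClosure_minimal _ (LinearPMap.le_graph_of_le hle) hcl
  refine le_antisymm hle' (LinearPMap.le_of_le_graph ?_)
  rintro ⟨y, w⟩ hyw
  rw [← hT.graph_closure_eq_closure_graph]
  have hdr : Dense (Set.range T.toFun) := by
    have : (LinearMap.range T.toFun).topologicalClosure = ⊤ := by
      rw [Submodule.topologicalClosure_eq_top_iff, Submodule.eq_bot_iff]
      intro v hv
      refine hrange v fun u => ?_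
      exact Submodule.inner_left_of_mem_orthogonal (LinearMap.mem_range_self T.toFun u) hv
    exact (Submodule.dense_iff_topologicalClosure_eq_top).2 this
  obtain ⟨s, hs, hsw⟩ := mem_closure_iff_seq_limit.1 (hdr w)
  choose u hu using hs
  have hu' : ∀ n, T (u n) = s n := hu
  have hcau : CauchySeq fun n => (u n : H) := by
    rw [Metric.cauchySeq_iff']
    intro ε hε
    obtain ⟨N, hN⟩ := Metric.cauchySeq_iff'.1 hsw.cauchySeq (c * ε) (by positivity)
    refine ⟨N, fun n hn => ?_⟩
    have h1 := hN n hn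
    have h2 := hlow (u n - u N)
    rw [LinearPMap.map_sub, hu', hu', ← dist_eq_norm] at h2
    rw [dist_eq_norm]
    push_cast at h2
    exact lt_of_mul_lt_mul_left (h2.trans_lt h1) hc.le
  obtain ⟨x, hx⟩ := cauchySeq_tendsto_of_complete hcau
  have hmem : (x, w) ∈ T.graph.topologicalClosure := by
    refine mem_closure_of_tendsto (hx.prodMk_nhds hsw) (Eventually.of_forall fun n => ?_)
    rw [← hu' n]
    exact T.mem_graph (u n)
  have hxw : (x, w) ∈ T.adjoint.graph := by
    rw [hT.graph_closure_eq_closure_graph] at hmem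
    exact LinearPMap.le_graph_of_le hle' hmem
  -- `y - x` lies in the kernel of the adjoint, which is the orthogonal complement of the range
  have hz : y - x = 0 := by
    refine hrange _ fun v => ?_
    have h := sub_mem hyw hxw
    rw [LinearPMap.adjoint_graph_eq_graph_adjoint hd, Submodule.mem_adjoint_iff] at h
    have := h v (T v) (T.mem_graph v)
    simp only [Prod.mk_sub_mk, sub_self, inner_zero_right, sub_zero] at this
    rw [← inner_conj_symm, this, map_zero]
  rw [sub_eq_zero] at hz
  exact hz ▸ hmem

/-! ### The constant-coefficient operator on Schwartz space -/

/-- The Fourier symbol `c + 4π²ξ²` of `c - d²/dt²`, for the normalisation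
`𝓕 f ξ = ∫ e^{-2πiξt} f t dt`. -/
noncomputable def symb (c : ℝ) (ξ : ℝ) : ℝ := c + (2 * Real.pi) ^ 2 * ‖ξ‖ ^ 2

/-- The operator `c - d²/dt²` on the Schwartz space of the line, encoded as the Fourier multiplier
with symbol `symb c`; see `A_apply` for the differential expression. -/
noncomputable def A (c : ℝ) : 𝓢(ℝ, ℂ) →L[ℝ] 𝓢(ℝ, ℂ) := fourierMultiplierCLM ℂ (symb c)

lemma symb_temperate (c : ℝ) : (symb c).HasTemperateGrowth := by
  unfold symb; fun_prop

lemma le_symb (c ξ : ℝ) : c ≤ symb c ξ := by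
  unfold symb; have : 0 ≤ (2 * Real.pi) ^ 2 * ‖ξ‖ ^ 2 := by positivity
  linarith

/-- The reciprocal symbol is a rescaling of `(1 + ξ²)⁻¹`, hence again a multiplier of Schwartz
space. This is what makes `A c` invertible there. -/
lemma symb_inv_temperate {c : ℝ} (hc : 0 < c) :
    (fun ξ => (symb c ξ)⁻¹).HasTemperateGrowth := by
  have h := (Function.hasTemperateGrowth_one_add_norm_sq_rpow ℝ (-1))
  let a : ℝ := 2 * Real.pi / √c
  have h2 : (fun ξ : ℝ => c⁻¹ * (1 + ‖a • ξ‖ ^ 2) ^ (-1 : ℝ)).HasTemperateGrowth := by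
    refine .mul (.const _) ?_
    exact h.comp (g := fun ξ : ℝ => (1 + ‖ξ‖ ^ 2) ^ (-1 : ℝ)) (f := fun ξ : ℝ => a • ξ)
      ((a • ContinuousLinearMap.id ℝ ℝ).hasTemperateGrowth)
  convert h2 using 2 with ξ
  rw [Real.rpow_neg_one, ← mul_inv, norm_smul, mul_pow, symb]
  congr 1
  simp only [a, Real.norm_eq_abs, sq_abs, div_pow, Real.sq_sqrt hc.le]
  field_simp

lemma A_apply (c : ℝ) (f : 𝓢(ℝ, ℂ)) (t : ℝ) :
    A c f t = c * f t - deriv (deriv f) t := by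
  have h1 : A c f = c • f - Laplacian.laplacian f := by
    rw [laplacian_eq_fourierMultiplierCLM]
    have : symb c = (fun _ => c) + ((2 * Real.pi) ^ 2 : ℝ) • (fun ξ : ℝ => ‖ξ‖ ^ 2) := by
      ext; simp [symb]
    rw [A, this]
    simp only [fourierMultiplierCLM_apply]
    rw [smulLeftCLM_add (by fun_prop) (by fun_prop), smulLeftCLM_smul (by fun_prop)]
    simp
  rw [h1]
  simp [laplacian_apply, InnerProductSpace.laplacian_eq_iteratedDeriv_real, iteratedDeriv_succ]

lemma A_surj {c : ℝ} (hc : 0 < c) : Function.Surjective (A c) := by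
  intro g
  refine ⟨fourierMultiplierCLM ℂ (fun ξ => (symb c ξ)⁻¹) g, ?_⟩
  rw [A, fourierMultiplierCLM_fourierMultiplierCLM_apply (symb_temperate c)
    (symb_inv_temperate hc)]
  have : symb c * (fun ξ => (symb c ξ)⁻¹) = fun _ => (1 : ℝ) := by
    ext ξ
    exact mul_inv_cancel₀ (hc.trans_le (le_symb c ξ)).ne'
  rw [this]; simp

lemma fourier_A_apply (c : ℝ) (f : 𝓢(ℝ, ℂ)) (ξ : ℝ) :
    𝓕 (A c f) ξ = symb c ξ * 𝓕 f ξ := by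
  rw [A, fourierMultiplierCLM_apply, fourier_fourierInv_eq,
    smulLeftCLM_apply_apply (symb_temperate c), Complex.real_smul]

/-- Plancherel for the sesquilinear form of `A c`. -/
lemma inner_A (c : ℝ) (f g : 𝓢(ℝ, ℂ)) :
    ⟪(A c f).toLp 2, g.toLp 2⟫_ℂ = ∫ ξ, (symb c ξ : ℂ) * ⟪𝓕 f ξ, 𝓕 g ξ⟫_ℂ := by
  rw [← inner_fourier_toL2_eq, inner_toL2_toL2_eq _ _ volume]
  congr 1; ext ξ
  rw [fourier_A_apply]
  simp [RCLike.inner_apply, mul_left_comm]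

lemma A_symm (c : ℝ) (f g : 𝓢(ℝ, ℂ)) :
    ⟪(A c f).toLp 2, g.toLp 2⟫_ℂ = ⟪f.toLp 2, (A c g).toLp 2⟫_ℂ := by
  rw [← inner_conj_symm (f.toLp 2 volume), inner_A, inner_A, ← integral_conj]
  simp [mul_comm]

/-- Since the symbol is at least `c`, `c‖f‖² ≤ ⟪A f, f⟫ ≤ ‖A f‖‖f‖`. -/
lemma A_lower {c : ℝ} (hc : 0 < c) (f : 𝓢(ℝ, ℂ)) :
    c * ‖f.toLp 2‖ ≤ ‖(A c f).toLp 2‖ := by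
  have h1 : c * ‖f.toLp 2‖ ^ 2 ≤ (⟪(A c f).toLp 2, f.toLp 2⟫_ℂ).re := by
    have e : ⟪(A c f).toLp 2, f.toLp 2⟫_ℂ = ((∫ ξ, symb c ξ * ‖𝓕 f ξ‖ ^ 2 : ℝ) : ℂ) := by
      rw [inner_A, ← integral_complex_ofReal]
      congr 1; ext ξ
      rw [inner_self_eq_norm_sq_to_K]; simp
    have e2 : ‖f.toLp 2‖ ^ 2 = ∫ ξ, ‖𝓕 f ξ‖ ^ 2 := by
      rw [integral_norm_sq_fourier, ← Complex.ofReal_inj, ← integral_complex_ofReal]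
      have := inner_toL2_toL2_eq f f (volume : Measure ℝ)
      rw [inner_self_eq_norm_sq_to_K] at this
      simp only [inner_self_eq_norm_sq_to_K] at this
      simpa using this
    rw [e, Complex.ofReal_re, e2, ← integral_const_mul]
    have hi : Integrable fun ξ => ‖𝓕 f ξ‖ ^ 2 := by
      exact (memLp_two_iff_integrable_sq_norm ((𝓕 f).continuous.aestronglyMeasurable)).1
        ((𝓕 f).memLp 2)
    refine integral_mono (hi.const_mul _) ?_ fun ξ =>
      mul_le_mul_of_nonneg_right (le_symb c ξ) (by positivity)
    have hp := (((𝓕 (A c f)).memLp 2 volume).norm).integrable_mul (((𝓕 f).memLp 2 volume).norm)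
    -- integrability of the right side: it is the product of `‖𝓕 (A c f)‖` and `‖𝓕 f‖`
    refine hp.congr (Filter.Eventually.of_forall fun ξ => ?_)
    have : 0 ≤ symb c ξ := hc.le.trans (le_symb c ξ)
    simp only [Pi.mul_apply, fourier_A_apply, norm_mul, Complex.norm_real, Real.norm_eq_abs,
      abs_of_nonneg this]
    ring
  have h2 := (Complex.re_le_norm _).trans (norm_inner_le_norm (𝕜 := ℂ) ((A c f).toLp 2) (f.toLp 2))
  rcases (norm_nonneg (f.toLp 2)).eq_or_lt with h | h
  · rw [← h]; simp
  · refine le_of_mul_le_mul_right ?_ h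
    nlinarith

lemma exists_cutoff : ∃ χ : ℝ → ℝ, ContDiff ℝ (⊤ : ℕ∞) χ ∧ HasCompactSupport χ ∧
    ∀ x, |x| ≤ 1 → χ x = 1 := by
  let b : ContDiffBump (0 : ℝ) := ⟨1, 2, by norm_num, by norm_num⟩
  refine ⟨b, b.contDiff, b.hasCompactSupport, fun x hx => b.one_of_mem_closedBall ?_⟩
  simpa using hx

/-! ### Density of compactly supported functions -/

/-- Compactly supported smooth functions are dense in Schwartz space: `χ(rx) f(x) → f(x)` in every
seminorm as `r → 0`. The error `(χ(rx) - 1) f(x)` lives where `r|x| ≥ 1`, so each of its seminorms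
is at most `r` times a combination of seminorms of `f` with one more power of `|x|`. -/
lemma exists_cc_tendsto (f : 𝓢(ℝ, ℂ)) : ∃ g : ℕ → 𝓢(ℝ, ℂ), (∀ n, HasCompactSupport (g n)) ∧
    Tendsto g atTop (𝓝 f) := by
  obtain ⟨χ, hχ, hχc, hχ1⟩ := exists_cutoff
  let r : ℕ → ℝ := fun n => ((n : ℝ) + 1)⁻¹
  have hr : ∀ n, 0 < r n := fun n => by positivity
  have hr1 : ∀ n, r n ≤ 1 := fun n => inv_le_one_of_one_le₀ (by simp)
  have hsm : ∀ n, ContDiff ℝ (⊤ : ℕ∞) fun x => χ (r n * x) := fun n => by fun_prop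
  have hsm' : ∀ n, ContDiff ℝ (⊤ : ℕ∞) fun x => (χ (r n * x)) • f x := fun n =>
    (hsm n).smul (f.smooth _)
  have hcs : ∀ n, HasCompactSupport fun x => (χ (r n * x)) • f x := fun n => by
    refine HasCompactSupport.smul_right (f := fun x => χ (r n * x)) ?_
    exact hχc.comp_homeomorph (Homeomorph.mulLeft₀ (r n) (hr n).ne')
  refine ⟨fun n => (hcs n).toSchwartzMap (hsm' n), fun n => hcs n, ?_⟩
  rw [(schwartz_withSeminorms ℝ ℝ ℂ).tendsto_nhds]
  rintro ⟨k, m⟩ ε hε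
  let ψ : ℝ → ℝ := fun x => χ x - 1
  have hψ : ContDiff ℝ (⊤ : ℕ∞) ψ := hχ.sub contDiff_const
  have hB : ∀ i, ∃ B, 0 ≤ B ∧ ∀ x, ‖iteratedDeriv i ψ x‖ ≤ B := by
    intro i
    have hcont : Continuous (iteratedDeriv i χ) := hχ.continuous_iteratedDeriv i (mod_cast le_top)
    have hcomp : HasCompactSupport fun x => ‖iteratedDeriv i χ x‖ := by
      simp only [← norm_iteratedFDeriv_eq_norm_iteratedDeriv]
      exact (hχc.iteratedFDeriv i).norm
    obtain ⟨B, hB⟩ := hcont.norm.bounded_above_of_compact_support hcomp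
    simp only [norm_norm] at hB
    refine ⟨B + 1, by linarith [(norm_nonneg _).trans (hB 0)], fun x => ?_⟩
    have hle : (i : WithTop ℕ∞) ≤ ((⊤ : ℕ∞) : WithTop ℕ∞) := mod_cast le_top
    have : iteratedDeriv i ψ x = iteratedDeriv i χ x - iteratedDeriv i (fun _ => (1 : ℝ)) x :=
      iteratedDeriv_fun_sub (hχ.of_le hle).contDiffAt contDiffAt_const
    rw [this, iteratedDeriv_const]
    refine (norm_sub_le _ _).trans (add_le_add (hB x) ?_)
    split_ifs <;> simp
  choose B hB0 hB using hB
  let C : ℝ := ∑ i ∈ Finset.range (m + 1), (m.choose i : ℝ) * B i *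
    SchwartzMap.seminorm ℝ (k + 1) (m - i) f
  have hC : 0 ≤ C := by
    refine Finset.sum_nonneg fun i _ => mul_nonneg (mul_nonneg (by positivity) (hB0 i))
      (apply_nonneg _ _)
  have key : ∀ n, SchwartzMap.seminorm ℝ k m ((hcs n).toSchwartzMap (hsm' n) - f) ≤ r n * C := by
    intro n
    refine SchwartzMap.seminorm_le_bound ℝ k m _ (mul_nonneg (hr n).le hC) fun x => ?_
    have hfun : (((hcs n).toSchwartzMap (hsm' n) - f : 𝓢(ℝ, ℂ)) : ℝ → ℂ) =
        fun x => ψ (r n * x) • f x := by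
      ext x
      simp [ψ, sub_mul]
    have hψr : ContDiff ℝ (⊤ : ℕ∞) fun x => ψ (r n * x) := by fun_prop
    rw [hfun]
    by_cases hx : |r n * x| < 1
    · have : (fun x => ψ (r n * x) • f x) =ᶠ[𝓝 x] 0 := by
        have hop : IsOpen {y : ℝ | |r n * y| < 1} :=
          isOpen_lt (by fun_prop) continuous_const
        filter_upwards [hop.mem_nhds hx] with y hy
        simp [ψ, hχ1 _ (le_of_lt hy)]
      rw [(this.iteratedFDeriv ℝ m).eq_of_nhds]
      simp
      positivity
    · have hx1 : 1 ≤ r n * ‖x‖ := by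
        rw [not_lt, abs_mul, abs_of_pos (hr n)] at hx
        exact hx
      have hL := norm_iteratedFDeriv_smul_le hψr (f.smooth ⊤) x (n := m) (mod_cast le_top)
      calc ‖x‖ ^ k * ‖iteratedFDeriv ℝ m (fun x => ψ (r n * x) • f x) x‖
          ≤ ‖x‖ ^ k * ∑ i ∈ Finset.range (m + 1), (m.choose i : ℝ) *
            ‖iteratedFDeriv ℝ i (fun x => ψ (r n * x)) x‖ * ‖iteratedFDeriv ℝ (m - i) f x‖ := by
            gcongr
        _ ≤ (r n * ‖x‖) * (‖x‖ ^ k * ∑ i ∈ Finset.range (m + 1), (m.choose i : ℝ) *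
            ‖iteratedFDeriv ℝ i (fun x => ψ (r n * x)) x‖ * ‖iteratedFDeriv ℝ (m - i) f x‖) :=
            le_mul_of_one_le_left (by positivity) hx1
        _ = r n * ∑ i ∈ Finset.range (m + 1), (m.choose i : ℝ) *
            ‖iteratedFDeriv ℝ i (fun x => ψ (r n * x)) x‖ *
              (‖x‖ ^ (k + 1) * ‖iteratedFDeriv ℝ (m - i) f x‖) := by
            simp only [Finset.mul_sum]
            refine Finset.sum_congr rfl fun i _ => ?_
            ring
        _ ≤ r n * C := by
            refine mul_le_mul_of_nonneg_left (Finset.sum_le_sum fun i _ => ?_) (hr n).le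
            have h1 : ‖iteratedFDeriv ℝ i (fun x => ψ (r n * x)) x‖ ≤ B i := by
              rw [norm_iteratedFDeriv_eq_norm_iteratedDeriv,
                iteratedDeriv_comp_const_mul (hψ.of_le (mod_cast le_top)), norm_mul]
              calc _ ≤ 1 * B i := by
                    gcongr
                    · rw [norm_pow, Real.norm_of_nonneg (hr n).le]
                      exact pow_le_one₀ (hr n).le (hr1 n)
                    · exact hB i _
                _ = B i := one_mul _
            have h2 := SchwartzMap.le_seminorm ℝ (k + 1) (m - i) f x
            gcongr
            exact mul_nonneg (Nat.cast_nonneg _) (hB0 i)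
  have hlim : Tendsto (fun n => r n * C) atTop (𝓝 0) := by
    have : Tendsto r atTop (𝓝 0) := by
      simpa [r] using tendsto_one_div_add_atTop_nhds_zero_nat (𝕜 := ℝ)
    simpa using this.mul_const C
  filter_upwards [hlim.eventually_lt_const hε] with n hn
  exact (key n).trans_lt hn

/-- The image of `C_c^∞` under `A^k` is dense in `L²`: `A^k` is continuous and onto on Schwartz
space, in which `C_c^∞` is dense, and Schwartz space is dense in `L²`. -/
lemma eq_zero_of_inner_iterate_A {c : ℝ} (hc : 0 < c) (k : ℕ) (v : Lp ℂ 2 (volume : Measure ℝ))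
    (hv : ∀ g : 𝓢(ℝ, ℂ), HasCompactSupport g → ⟪v, ((A c)^[k] g).toLp 2⟫_ℂ = 0) : v = 0 := by
  have hcont : Continuous fun g : 𝓢(ℝ, ℂ) => ⟪v, ((A c)^[k] g).toLp 2⟫_ℂ :=
    continuous_const.inner ((toLpCLM ℝ ℂ 2 volume).continuous.comp ((A c).continuous.iterate k))
  have hall : ∀ g : 𝓢(ℝ, ℂ), ⟪v, ((A c)^[k] g).toLp 2⟫_ℂ = 0 := by
    intro g
    obtain ⟨s, hs, hsg⟩ := exists_cc_tendsto g
    refine tendsto_nhds_unique ((hcont.tendsto g).comp hsg) ?_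
    simp only [Function.comp_def, hv _ (hs _), tendsto_const_nhds_iff]
  have hd : DenseRange (toLpCLM ℝ ℂ 2 (volume : Measure ℝ)) := denseRange_toLpCLM (by simp)
  refine Dense.eq_zero_of_inner_left ℂ hd ?_
  rintro _ ⟨g, rfl⟩
  obtain ⟨g', rfl⟩ := ((A_surj hc).iterate k) g
  exact hall g'

lemma iterate_A_symm (c : ℝ) (k : ℕ) (f g : 𝓢(ℝ, ℂ)) :
    ⟪((A c)^[k] f).toLp 2, g.toLp 2⟫_ℂ = ⟪f.toLp 2, ((A c)^[k] g).toLp 2⟫_ℂ := by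
  induction k generalizing f with
  | zero => rfl
  | succ k ih =>
    rw [Function.iterate_succ_apply, ih, A_symm, ← Function.iterate_succ_apply' (A c)]

lemma iterate_A_lower {c : ℝ} (hc : 0 < c) (k : ℕ) (f : 𝓢(ℝ, ℂ)) :
    c ^ k * ‖f.toLp 2‖ ≤ ‖((A c)^[k] f).toLp 2‖ := by
  induction k with
  | zero => simp
  | succ k ih =>
    rw [Function.iterate_succ_apply', pow_succ', mul_assoc]
    exact (mul_le_mul_of_nonneg_left ih hc.le).trans (A_lower hc _)

/-! ### Test functions on the half-line and the logarithmic change of variables -/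

/-- Membership in `C_c^∞((0,∞))`, for functions on the whole line extended by zero. -/
structure IsTest (f : ℝ → ℂ) : Prop where
  smooth : ContDiff ℝ (⊤ : ℕ∞) f
  compact : HasCompactSupport f
  supp : tsupport f ⊆ Set.Ioi 0

lemma IsTest.deriv {f : ℝ → ℂ} (hf : IsTest f) : IsTest (deriv f) where
  smooth := by
    have := hf.smooth
    exact (contDiff_infty_iff_deriv.1 this).2
  compact := hf.compact.deriv
  supp := (tsupport_deriv_subset).trans hf.supp

lemma IsTest.mul {f : ℝ → ℂ} (hf : IsTest f) {m : ℝ → ℂ} (hm : ContDiff ℝ (⊤ : ℕ∞) m) :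
    IsTest fun x => m x * f x where
  smooth := hm.mul hf.smooth
  compact := hf.compact.mul_left
  supp := (tsupport_mul_subset_right).trans hf.supp

lemma IsTest.add {f g : ℝ → ℂ} (hf : IsTest f) (hg : IsTest g) : IsTest fun x => f x + g x where
  smooth := hf.smooth.add hg.smooth
  compact := hf.compact.add hg.compact
  supp := (tsupport_add f g).trans (Set.union_subset hf.supp hg.supp)

lemma contDiff_ofReal' : ContDiff ℝ (⊤ : ℕ∞) fun x : ℝ => (x : ℂ) := Complex.ofRealCLM.contDiff

lemma IsTest.Lop {f : ℝ → ℂ} (hf : IsTest f) (lam : ℝ) : IsTest (Lop lam f) := by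
  have h := ((hf.deriv.deriv.mul (m := fun x : ℝ => -(x : ℂ) ^ 2)
      (contDiff_ofReal'.pow 2).neg).add
    (hf.deriv.mul (m := fun x : ℝ => -(2 * (x : ℂ)))
      (contDiff_const.mul contDiff_ofReal').neg)).add
    (hf.mul (m := fun _ => (lam : ℂ)) contDiff_const)
  convert h using 1
  ext x
  simp only [_root_.Lop, iteratedDeriv_succ, iteratedDeriv_zero]
  ring

lemma IsTest.iterate_Lop {f : ℝ → ℂ} (hf : IsTest f) (lam : ℝ) (k : ℕ) :
    IsTest ((_root_.Lop lam)^[k] f) := by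
  induction k with
  | zero => exact hf
  | succ k ih => rw [Function.iterate_succ_apply']; exact ih.Lop lam

/-- The logarithmic change of variables `f ↦ e^{t/2} f(e^t)`. The factor `e^{t/2}` makes it an
isometry from `L²((0,∞))` to `L²(ℝ)`. -/
noncomputable def pull (f : ℝ → ℂ) : ℝ → ℂ := fun t => (Real.exp (t / 2) : ℂ) * f (Real.exp t)

/-- The right inverse `h ↦ x^{-1/2} h(log x)` of `pull`, extended by zero to `x ≤ 0`. -/
noncomputable def push (h : ℝ → ℂ) : ℝ → ℂ := fun x =>
  if 0 < x then (Real.exp (-(Real.log x) / 2) : ℂ) * h (Real.log x) else 0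

lemma pull_push (h : ℝ → ℂ) : pull (push h) = h := by
  ext t
  simp only [pull, push, Real.exp_pos, if_true, Real.log_exp]
  rw [← mul_assoc, ← Complex.ofReal_mul, ← Real.exp_add]
  simp [neg_div]

lemma isTest_push {h : ℝ → ℂ} (hs : ContDiff ℝ (⊤ : ℕ∞) h) (hc : HasCompactSupport h) :
    IsTest (push h) := by
  have hK : IsCompact (Real.exp '' tsupport h) := hc.isCompact.image Real.continuous_exp
  have hsub : Function.support (push h) ⊆ Real.exp '' tsupport h := by
    intro x hx
    by_cases h0 : 0 < x
    · refine ⟨Real.log x, subset_tsupport _ ?_, Real.exp_log h0⟩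
      intro h1
      simp [push, h1] at hx
    · simp [push, h0] at hx
  have htsub : tsupport (push h) ⊆ Real.exp '' tsupport h :=
    closure_minimal hsub hK.isClosed
  have hpos : tsupport (push h) ⊆ Set.Ioi 0 := by
    refine htsub.trans ?_
    rintro _ ⟨t, -, rfl⟩
    exact Real.exp_pos t
  refine ⟨?_, HasCompactSupport.of_support_subset_isCompact hK hsub, hpos⟩
  rw [contDiff_iff_contDiffAt]
  intro x
  by_cases h0 : 0 < x
  · have hl : ContDiffAt ℝ (⊤ : ℕ∞) Real.log x := Real.contDiffAt_log.2 h0.ne'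
    have : ContDiffAt ℝ (⊤ : ℕ∞)
        (fun x => (Real.exp (-(Real.log x) / 2) : ℂ) * h (Real.log x)) x := by
      refine ContDiffAt.mul ?_ (hs.contDiffAt.comp x hl)
      exact contDiff_ofReal'.contDiffAt.comp x
        (Real.contDiff_exp.contDiffAt.comp x (hl.neg.div_const 2))
    refine this.congr_of_eventuallyEq ?_
    filter_upwards [lt_mem_nhds h0] with y hy
    simp [push, hy]
  · have : push h =ᶠ[𝓝 x] 0 := notMem_tsupport_iff_eventuallyEq.1 fun hx => h0 (hpos hx)
    exact contDiffAt_const.congr_of_eventuallyEq this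

lemma contDiff_pull {f : ℝ → ℂ} (hf : IsTest f) : ContDiff ℝ (⊤ : ℕ∞) (pull f) :=
  (contDiff_ofReal'.comp (Real.contDiff_exp.comp (contDiff_id.div_const 2))).mul
    (hf.smooth.comp Real.contDiff_exp)

lemma hasCompactSupport_pull {f : ℝ → ℂ} (hf : IsTest f) : HasCompactSupport (pull f) := by
  have hK : IsCompact (Real.log '' tsupport f) :=
    hf.compact.isCompact.image_of_continuousOn
      (Real.continuousOn_log.mono fun x hx => (hf.supp hx : (0 : ℝ) < x).ne')
  refine HasCompactSupport.of_support_subset_isCompact hK fun t ht => ?_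
  refine ⟨Real.exp t, subset_tsupport _ fun h0 => ?_, Real.log_exp t⟩
  simp [pull, h0] at ht

/-- `pull f` as a Schwartz function, for a test function `f`. -/
noncomputable def toS {f : ℝ → ℂ} (hf : IsTest f) : 𝓢(ℝ, ℂ) :=
  (hasCompactSupport_pull hf).toSchwartzMap (contDiff_pull hf)

lemma toS_apply {f : ℝ → ℂ} (hf : IsTest f) (t : ℝ) : toS hf t = pull f t := rfl

lemma deriv_pull {f : ℝ → ℂ} (hf : Differentiable ℝ f) :
    deriv (pull f) = pull fun x => f x / 2 + x * deriv f x := by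
  ext t
  have h1 : HasDerivAt (fun t : ℝ => (Real.exp (t / 2) : ℂ))
      ((Real.exp (t / 2) * (1 / 2) : ℝ) : ℂ) t :=
    (((hasDerivAt_id t).div_const 2).exp).ofReal_comp
  have h2 : HasDerivAt (fun t : ℝ => f (Real.exp t)) (Real.exp t • deriv f (Real.exp t)) t :=
    (hf _).hasDerivAt.scomp t (Real.hasDerivAt_exp t)
  have := (h1.mul h2).deriv
  change deriv (pull f) t = _ at this
  rw [this]
  simp only [pull, Complex.real_smul]
  push_cast
  ring

/-- The change of variables turns `L` into `-d²/dt² + (λ + 1/4)`: the generator `x d/dx + 1/2`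
becomes `d/dt`, and `L = -(x d/dx + 1/2)² + λ + 1/4`. -/
lemma toS_Lop {f : ℝ → ℂ} (hf : IsTest f) (lam : ℝ) :
    toS (hf.Lop lam) = A (lam + 1 / 4) (toS hf) := by
  ext t
  have hd : Differentiable ℝ f := hf.smooth.differentiable (by simp)
  have hd' : Differentiable ℝ (deriv f) := hf.deriv.smooth.differentiable (by simp)
  have hdx : Differentiable ℝ (fun x : ℝ => (x : ℂ)) := contDiff_ofReal'.differentiable (by simp)
  have e1 : deriv (toS hf) = pull fun x => f x / 2 + x * deriv f x := deriv_pull hd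
  have e2 : ∀ x : ℝ, deriv (fun x : ℝ => f x / 2 + x * deriv f x) x =
      deriv f x / 2 + (deriv f x + x * deriv (deriv f) x) := by
    intro x
    have h1 := (hd x).hasDerivAt.div_const 2
    have h2 := ((hasDerivAt_id x).ofReal_comp).mul (hd' x).hasDerivAt
    have h := (h1.add h2).deriv
    change deriv (fun x : ℝ => f x / 2 + x * deriv f x) x = _ at h
    rw [h]
    simp
  have hd2 : Differentiable ℝ fun x : ℝ => f x / 2 + x * deriv f x :=
    (hd.div_const 2).add (hdx.mul hd')
  rw [A_apply, e1, deriv_pull hd2]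
  simp only [toS_apply, pull, e2, Lop, iteratedDeriv_succ, iteratedDeriv_zero]
  push_cast
  ring

lemma toS_iterate_Lop {f : ℝ → ℂ} (hf : IsTest f) (lam : ℝ) (k : ℕ) :
    toS (hf.iterate_Lop lam k) = (A (lam + 1 / 4))^[k] (toS hf) := by
  induction k with
  | zero => rfl
  | succ k ih =>
    rw [Function.iterate_succ_apply' (A (lam + 1 / 4)), ← ih, ← toS_Lop]
    ext t
    simp only [toS_apply, Function.iterate_succ_apply']

/-! ### The change of variables as an isometry of `L²` spaces -/

/-- Null sets of the half-line pull back to null sets of the line under `exp`, because `log` is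
differentiable there. Hence `pull` respects almost everywhere equality. -/
lemma quasi_exp : Measure.QuasiMeasurePreserving Real.exp volume
    (volume.restrict (Set.Ioi (0 : ℝ))) := by
  refine ⟨Real.measurable_exp, Measure.AbsolutelyContinuous.mk fun s hs h0 => ?_⟩
  rw [Measure.restrict_apply hs] at h0
  rw [Measure.map_apply Real.measurable_exp hs]
  refine measure_mono_null (t := Real.log '' (s ∩ Set.Ioi 0)) ?_ ?_
  · intro t ht
    exact ⟨Real.exp t, ⟨ht, Real.exp_pos t⟩, Real.log_exp t⟩
  · refine addHaar_image_eq_zero_of_differentiableOn_of_addHaar_eq_zero volume ?_ h0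
    exact Real.differentiableOn_log.mono fun x hx => (hx.2 : (0 : ℝ) < x).ne'

lemma pull_congr {f g : ℝ → ℂ} (h : f =ᵐ[volume.restrict (Set.Ioi (0 : ℝ))] g) :
    pull f =ᵐ[volume] pull g := by
  filter_upwards [quasi_exp.ae h] with t ht
  simp only [pull, ht]

lemma norm_pull_sq (f : ℝ → ℂ) (t : ℝ) :
    ‖pull f t‖ ^ 2 = |Real.exp t| • ‖f (Real.exp t)‖ ^ 2 := by
  rw [pull, norm_mul, mul_pow, Complex.norm_real, Real.norm_eq_abs, sq_abs, ← Real.exp_nat_mul,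
    abs_of_pos (Real.exp_pos t), smul_eq_mul]
  congr 2
  push_cast; ring

lemma memLp_pull (a : Lp ℂ 2 (volume.restrict (Set.Ioi (0 : ℝ)))) : MemLp (pull a) 2 := by
  have hm : AEStronglyMeasurable (pull a) volume := by
    refine (Continuous.aestronglyMeasurable (by fun_prop)).mul ?_
    exact (Lp.aestronglyMeasurable a).comp_quasiMeasurePreserving quasi_exp
  rw [memLp_two_iff_integrable_sq_norm hm]
  have h := (memLp_two_iff_integrable_sq_norm (Lp.aestronglyMeasurable a)).1 (Lp.memLp a)
  have h2 := (integrableOn_image_iff_integrableOn_abs_deriv_smul MeasurableSet.univ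
    (fun x _ => (Real.hasDerivAt_exp x).hasDerivWithinAt) Real.exp_injective.injOn
    (fun x => ‖a x‖ ^ 2)).1 (by rwa [Set.image_univ, Real.range_exp])
  rw [integrableOn_univ] at h2
  exact h2.congr (Eventually.of_forall fun t => (norm_pull_sq a t).symm)

/-- The isometry `L²((0,∞)) → L²(ℝ)` induced by `pull`. Linearity is not part of the definition;
preservation of inner products is `inner_U`. -/
noncomputable def U (a : Lp ℂ 2 (volume.restrict (Set.Ioi (0 : ℝ)))) :
    Lp ℂ 2 (volume : Measure ℝ) := (memLp_pull a).toLp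

lemma inner_U (a b : Lp ℂ 2 (volume.restrict (Set.Ioi (0 : ℝ)))) : ⟪U a, U b⟫_ℂ = ⟪a, b⟫_ℂ := by
  have hsubst : ∀ g : ℝ → ℂ, ∫ x in Set.Ioi 0, g x = ∫ t, |Real.exp t| • g (Real.exp t) := by
    intro g
    have h := integral_image_eq_integral_abs_deriv_smul MeasurableSet.univ
      (fun x _ => (Real.hasDerivAt_exp x).hasDerivWithinAt) Real.exp_injective.injOn g
    rwa [Set.image_univ, Real.range_exp, Measure.restrict_univ] at h
  rw [L2.inner_def, L2.inner_def, hsubst]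
  refine integral_congr_ae ?_
  filter_upwards [(memLp_pull a).coeFn_toLp, (memLp_pull b).coeFn_toLp] with t ha hb
  rw [U, U, ha, hb]
  have : (Real.exp t : ℂ) = (Real.exp (t / 2) : ℂ) * (Real.exp (t / 2) : ℂ) := by
    rw [← Complex.ofReal_mul, ← Real.exp_add]; congr 2; ring
  simp only [pull, RCLike.inner_apply, abs_of_pos (Real.exp_pos t), Complex.real_smul, this,
    map_mul, Complex.conj_ofReal]
  ring

lemma norm_U (a : Lp ℂ 2 (volume.restrict (Set.Ioi (0 : ℝ)))) : ‖U a‖ = ‖a‖ := by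
  rw [norm_eq_sqrt_re_inner (𝕜 := ℂ), inner_U, ← norm_eq_sqrt_re_inner]

lemma U_eq_toS {f : ℝ → ℂ} (hf : IsTest f) {a : Lp ℂ 2 (volume.restrict (Set.Ioi (0 : ℝ)))}
    (ha : (a : ℝ → ℂ) =ᵐ[volume.restrict (Set.Ioi (0 : ℝ))] f) : U a = (toS hf).toLp 2 := by
  refine Lp.ext ?_
  filter_upwards [(memLp_pull a).coeFn_toLp, (toS hf).coeFn_toLp 2, pull_congr ha] with t h1 h2 h3
  rw [U, h1, h2, h3, toS_apply]

/-! ### Essential self-adjointness of `L^k` -/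

/-- Lemma S121 (scalar case): the operator `T = (DᵗD + λ)^k` with domain
`C_c^∞((0,∞)) ⊆ L²((0,∞))` is symmetric and essentially self-adjoint: its closure
coincides with its adjoint. -/
theorem stmt15 (lam : ℝ) (hlam : 0 ≤ lam) (k : ℕ) (hk : 1 ≤ k)
    (T : Lp ℂ 2 (volume.restrict (Set.Ioi (0 : ℝ)))
          →ₗ.[ℂ] Lp ℂ 2 (volume.restrict (Set.Ioi (0 : ℝ))))
    (hdom : (T.domain : Set (Lp ℂ 2 (volume.restrict (Set.Ioi (0 : ℝ))))) = ccSet)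
    (hact : ∀ (u : T.domain) (f : ℝ → ℂ), ContDiff ℝ (⊤ : ℕ∞) f → HasCompactSupport f →
        tsupport f ⊆ Set.Ioi 0 →
        ((u : Lp ℂ 2 (volume.restrict (Set.Ioi (0 : ℝ)))) : ℝ → ℂ)
            =ᵐ[volume.restrict (Set.Ioi (0 : ℝ))] f →
        (T u : ℝ → ℂ) =ᵐ[volume.restrict (Set.Ioi (0 : ℝ))] (Lop lam)^[k] f) :
    (∀ u v : T.domain,
        ⟪T u, (v : Lp ℂ 2 (volume.restrict (Set.Ioi (0 : ℝ))))⟫_ℂ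
          = ⟪(u : Lp ℂ 2 (volume.restrict (Set.Ioi (0 : ℝ)))), T v⟫_ℂ) ∧
      T.closure = T.adjoint := by
  have hc : 0 < lam + 1 / 4 := by linarith
  have mem_iff : ∀ a, a ∈ T.domain ↔ a ∈ ccSet := fun a => by rw [← hdom]; rfl
  -- the graph of `T` corresponds under `U` to that of `(A (lam + 1 / 4))^k`
  have hrep : ∀ (u : T.domain) (f : ℝ → ℂ) (hf : IsTest f),
      ((u : Lp ℂ 2 (volume.restrict (Set.Ioi (0 : ℝ)))) : ℝ → ℂ)
        =ᵐ[volume.restrict (Set.Ioi (0 : ℝ))] f →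
      U u = (toS hf).toLp 2 ∧ U (T u) = ((A (lam + 1 / 4))^[k] (toS hf)).toLp 2 := by
    intro u f hf hu
    refine ⟨U_eq_toS hf hu, ?_⟩
    rw [← toS_iterate_Lop hf lam k]
    exact U_eq_toS _ (hact u f hf.smooth hf.compact hf.supp hu)
  have hu : ∀ u : T.domain, ∃ g : 𝓢(ℝ, ℂ),
      U u = g.toLp 2 ∧ U (T u) = ((A (lam + 1 / 4))^[k] g).toLp 2 := by
    intro u
    obtain ⟨f, h1, h2, h3, h4⟩ := (mem_iff u).1 u.2
    exact ⟨_, hrep u f ⟨h1, h2, h3⟩ h4⟩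
  have hg : ∀ g : 𝓢(ℝ, ℂ), HasCompactSupport g → ∃ u : T.domain,
      U u = g.toLp 2 ∧ U (T u) = ((A (lam + 1 / 4))^[k] g).toLp 2 := by
    intro g hgc
    have hf := isTest_push (g.smooth ⊤) hgc
    have hm : MemLp (push g) 2 (volume.restrict (Set.Ioi (0 : ℝ))) :=
      hf.smooth.continuous.memLp_of_hasCompactSupport hf.compact
    have hae := hm.coeFn_toLp
    have hS : toS hf = g := by
      ext t
      rw [toS_apply, pull_push]
    have := hrep ⟨hm.toLp, (mem_iff _).2 ⟨_, hf.smooth, hf.compact, hf.supp, hae⟩⟩ _ hf hae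
    rw [hS] at this
    exact ⟨_, this⟩
  have hU0 : ∀ v, U v = 0 → v = 0 := fun v hv => by
    rw [← norm_eq_zero, ← norm_U, hv, norm_zero]
  have hsym : ∀ u v : T.domain,
        ⟪T u, (v : Lp ℂ 2 (volume.restrict (Set.Ioi (0 : ℝ))))⟫_ℂ
          = ⟪(u : Lp ℂ 2 (volume.restrict (Set.Ioi (0 : ℝ)))), T v⟫_ℂ := by
    intro u v
    obtain ⟨f, hf1, hf2⟩ := hu u
    obtain ⟨g, hg1, hg2⟩ := hu v
    rw [← inner_U, ← inner_U, hf1, hf2, hg1, hg2, iterate_A_symm]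
  have hd : Dense (T.domain : Set (Lp ℂ 2 (volume.restrict (Set.Ioi (0 : ℝ))))) := by
    rw [Submodule.dense_iff_topologicalClosure_eq_top, Submodule.topologicalClosure_eq_top_iff,
      Submodule.eq_bot_iff]
    intro v hv
    refine hU0 v (eq_zero_of_inner_iterate_A hc 0 _ fun g hgc => ?_)
    obtain ⟨u, h1, -⟩ := hg g hgc
    rw [Function.iterate_zero_apply, ← h1, inner_U]
    exact Submodule.inner_left_of_mem_orthogonal u.2 hv
  refine ⟨hsym, closure_eq_adjoint_of_bounded_below T hd hsym (pow_pos hc k) ?_ ?_⟩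
  · intro u
    obtain ⟨f, hf1, hf2⟩ := hu u
    rw [← norm_U, ← norm_U (T u), hf1, hf2]
    exact iterate_A_lower hc k f
  · intro v hv
    refine hU0 v (eq_zero_of_inner_iterate_A hc k _ fun g hgc => ?_)
    obtain ⟨u, -, h2⟩ := hg g hgc
    rw [← h2, inner_U, hv]
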